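/- Let p be a prime, q a power of p, k an algebraic closure of 𝔽_p, and σ : k → k the automorphism x ↦ x^q. Let M be a finite-dimensional k-vector space and F : M → M a σ-semilinear map. Then the map F − id : M → M is surjective: for every m ∈ M there exists x ∈ M with F(x) − x = m. -/

import Mathlib

open Polynomial in
noncomputable def semilinAuxPoly {k : Type*} [Field k] (q : ℕ) (a : ℕ → k) : ℕ → k[X]
  | 0 => C (a 0) * X ^ q - 1
  | (i + 1) => (semilinAuxPoly q a i) ^ q + C (a (i + 1)) * X ^ q

open Polynomial in
theorem semilinAuxPoly_deriv {k : Type*} [Field k] (q : ℕ) (hq : (q : k) = 0) (a : ℕ → k)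
    (i : ℕ) : derivative (semilinAuxPoly q a i) = 0 := by
  induction i with
  | zero => simp [semilinAuxPoly, derivative_X_pow, hq]
  | succ i ih => simp [semilinAuxPoly, derivative_X_pow, derivative_pow, hq, ih]

theorem semilin_exists_rel {k M : Type*} [Field k] [AddCommGroup M] [Module k M]
    [FiniteDimensional k M] (v : ℕ → M) :
    ∃ (N : ℕ) (a : ℕ → k), v (N + 1) = ∑ i ∈ Finset.range (N + 1), a i • v i := by
  let f : ℕ →o Submodule k M :=
    ⟨fun n => Submodule.span k (v '' (Finset.range n : Set ℕ)), fun i j h => by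
      apply Submodule.span_mono
      apply Set.image_mono
      simpa using h⟩
  obtain ⟨n, hn⟩ := monotone_stabilizes_iff_noetherian.mpr (inferInstance : IsNoetherian k M) f
  have h1 : f (n + 1) = f (n + 2) := (hn (n + 1) (by omega)).symm.trans (hn (n + 2) (by omega))
  have h2 : v (n + 1) ∈ f (n + 2) :=
    Submodule.subset_span ⟨n + 1, by simp, rfl⟩
  rw [← h1] at h2
  obtain ⟨c, hc⟩ := (Submodule.mem_span_image_finset_iff_exists_fun k).mp h2
  refine ⟨n, fun i => if h : i ∈ Finset.range (n + 1) then c ⟨i, h⟩ else 0, ?_⟩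
  rw [← hc, ← Finset.sum_coe_sort (Finset.range (n + 1))]
  refine Finset.sum_congr rfl fun i _ => ?_
  beta_reduce
  rw [dif_pos i.2]

/-- Let `p` be a prime, `q` a power of `p`, `k` an algebraic closure of `𝔽_p` and
`σ : k → k` the automorphism `x ↦ x ^ q`.  For any finite-dimensional `k`-vector space `M`
and any `σ`-semilinear map `F : M → M`, the map `F - id` is surjective. -/
theorem semilinear_sub_id_surjective
    (p : ℕ) [Fact p.Prime] (q e : ℕ) (he : 0 < e) (hq : q = p ^ e)
    (k : Type*) [Field k] [Algebra (ZMod p) k] [IsAlgClosure (ZMod p) k]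
    (σ : k →+* k) (hσ : ∀ x : k, σ x = x ^ q)
    (M : Type*) [AddCommGroup M] [Module k M] [FiniteDimensional k M]
    (F : M →ₛₗ[σ] M) :
    ∀ m : M, ∃ x : M, F x - x = m := by
  intro m
  haveI : IsAlgClosed k := IsAlgClosure.isAlgClosed (ZMod p)
  haveI : CharP k p := charP_of_injective_algebraMap (algebraMap (ZMod p) k).injective p
  have hq0 : (q : k) = 0 := by
    rw [hq, Nat.cast_pow, CharP.cast_eq_zero, zero_pow he.ne']
  obtain ⟨N, a, ha⟩ := semilin_exists_rel (k := k) (fun i => F^[i] m)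
  obtain ⟨t, ht⟩ := IsAlgClosed.exists_root (semilinAuxPoly q a N - Polynomial.X) (by
    intro h
    have h1 := Polynomial.eq_C_of_degree_eq_zero h
    have h2 := congrArg Polynomial.derivative h1
    simp [semilinAuxPoly_deriv q hq0] at h2)
  have ht' : (semilinAuxPoly q a N).eval t = t := by
    simpa [Polynomial.IsRoot, sub_eq_zero] using ht
  have key : ∀ j, F (∑ i ∈ Finset.range (j + 1), (semilinAuxPoly q a i).eval t • F^[i] m)
      - ∑ i ∈ Finset.range (j + 1), (semilinAuxPoly q a i).eval t • F^[i] m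
      = m + ((semilinAuxPoly q a j).eval t) ^ q • F^[j + 1] m
        - t ^ q • ∑ i ∈ Finset.range (j + 1), a i • F^[i] m := by
    intro j
    induction j with
    | zero =>
      simp [semilinAuxPoly, hσ, LinearMap.map_smulₛₗ]
      module
    | succ j ih =>
      rw [Finset.sum_range_succ, map_add, add_sub_add_comm, ih, Finset.sum_range_succ _ (j + 1),
        LinearMap.map_smulₛₗ, hσ, ← Function.iterate_succ_apply' F]
      have : (semilinAuxPoly q a (j + 1)).eval t
        = (semilinAuxPoly q a j).eval t ^ q + a (j + 1) * t ^ q := by simp [semilinAuxPoly]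
      generalize (semilinAuxPoly q a (j + 1)).eval t = u at this ⊢
      rw [smul_add]
      have h3 : u • F^[j + 1] m = (semilinAuxPoly q a j).eval t ^ q • F^[j + 1] m
        + t ^ q • a (j + 1) • F^[j + 1] m := by rw [this]; module
      rw [h3]
      abel
  refine ⟨_, (key N).trans ?_⟩
  rw [ht', ← ha]
  simp
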